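/- arXiv:1204.4999 — 4 statements merged into one kernel-verified Lean document; each statement's English description precedes it below -/
import Mathlib

section
/- The maps θ and ω are chain maps and θ is a retraction of ω: θ₀ ∘ δ = Δ₁ ∘ θ₁, δ ∘ ω₁ = ω₀ ∘ Δ₁, θ₀ ∘ ω₀ = id on C₀, and θ₁ ∘ ω₁ = id on C₁. -/
noncomputable section

/-- The differential `δ : F → F` (degree 1 → degree 0) on formal series
`F = (ℕ → ℚ)`, dual of `d` on `Λ(t,dt)`: `(δμ)(0) = 0`, `(δμ)(j) = j·μ(j-1)`. -/
def deltaDiff : (ℕ → ℚ) →ₗ[ℚ] (ℕ → ℚ) where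
  toFun μ := fun j => if j = 0 then 0 else (j : ℚ) * μ (j - 1)
  map_add' μ ν := by
    funext j
    by_cases h : j = 0 <;> simp [h, mul_add]
  map_smul' a μ := by
    funext j
    by_cases h : j = 0 <;> simp [h, smul_eq_mul] <;> ring

/-- `C₀ = ℚy ⊕ ℚz`, modelled as `ℚ × ℚ` (coefficients of `y` and `z`). -/
def ey : ℚ × ℚ := (1, 0)
def ez : ℚ × ℚ := (0, 1)

/-- `θ` in degree 0: `θ₀(λ) = -λ(0)·y + λ(1)·(y - z)`. -/
def theta0 : (ℕ → ℚ) →ₗ[ℚ] ℚ × ℚ where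
  toFun l := (-(l 0)) • ey + (l 1) • (ey - ez)
  map_add' l m := by
    simp only [Pi.add_apply]
    module
  map_smul' a l := by
    simp only [Pi.smul_apply, smul_eq_mul, RingHom.id_apply]
    module

/-- `θ` in degree 1: `θ₁(μ) = μ(0)·c`, with `C₁ = ℚc` modelled as `ℚ`. -/
def theta1 : (ℕ → ℚ) →ₗ[ℚ] ℚ := LinearMap.proj 0

/-- The differential of `C`: `Δ₁ c = y - z`. -/
def delta1C : ℚ →ₗ[ℚ] ℚ × ℚ := LinearMap.toSpanSingleton ℚ (ℚ × ℚ) (ey - ez)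

/-- The indicator function of `0` (the series `α₀`). -/
def ind0 : ℕ → ℚ := fun j => if j = 0 then 1 else 0

/-- `ω` in degree 0: `ω₀(y) = -α₀`, `ω₀(z) = -∑_i α_i` (the negated constant `1`). -/
def omega0 : ℚ × ℚ →ₗ[ℚ] (ℕ → ℚ) :=
  (LinearMap.toSpanSingleton ℚ (ℕ → ℚ) (-ind0)).comp (LinearMap.fst ℚ ℚ ℚ) +
    (LinearMap.toSpanSingleton ℚ (ℕ → ℚ) (-fun _ => (1 : ℚ))).comp (LinearMap.snd ℚ ℚ ℚ)

/-- `ω` in degree 1: `ω₁(c) = ∑_i β_i/(i+1)`, i.e. the series `j ↦ 1/(j+1)`. -/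
def omega1 : ℚ →ₗ[ℚ] (ℕ → ℚ) :=
  LinearMap.toSpanSingleton ℚ (ℕ → ℚ) (fun j => 1 / ((j : ℚ) + 1))

/-- `θ` and `ω` are chain maps and `θ` is a retraction of `ω`:
`θ₀ ∘ δ = Δ₁ ∘ θ₁`, `δ ∘ ω₁ = ω₀ ∘ Δ₁`, `θ₀ ∘ ω₀ = id` and `θ₁ ∘ ω₁ = id`. -/
theorem theta_omega_chain_retract :
    theta0.comp deltaDiff = delta1C.comp theta1 ∧
    deltaDiff.comp omega1 = omega0.comp delta1C ∧
    theta0.comp omega0 = LinearMap.id ∧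
    theta1.comp omega1 = LinearMap.id := by
  refine ⟨?_, ?_, ?_, ?_⟩
  · refine LinearMap.ext fun μ => ?_
    simp [theta0, deltaDiff, delta1C, theta1]
  · refine LinearMap.ext fun a => funext fun j => ?_
    rcases j with _ | j
    · simp [deltaDiff, omega1, omega0, delta1C, ind0, ey, ez]
    · have h : (j : ℚ) + 1 ≠ 0 := by positivity
      simp [deltaDiff, omega1, omega0, delta1C, ind0, ey, ez]
      field_simp
  · refine LinearMap.ext fun v => ?_
    ext <;> simp [theta0, omega0, ind0, ey, ez]
  · refine LinearMap.ext fun a => ?_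
    simp [theta1, omega1]

end
end

section
/- The map K is a chain homotopy between ω∘θ and the identity satisfying the side conditions of the Perturbation Lemma: δ ∘ K = ω₀ ∘ θ₀ − id on F (degree 0), K ∘ δ = ω₁ ∘ θ₁ − id on F (degree 1), θ₁ ∘ K = 0, and K ∘ ω₀ = 0. -/
noncomputable section

/-- The homotopy `K : F → F` (degree 0 → degree 1):
`K(λ)(0) = 0` and `K(λ)(i) = (λ(1) - λ(i+1))/(i+1)` for `i ≥ 1`. -/
def Kmap : (ℕ → ℚ) →ₗ[ℚ] (ℕ → ℚ) where
  toFun l := fun i => if i = 0 then 0 else (l 1 - l (i + 1)) / ((i : ℚ) + 1)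
  map_add' l m := by
    funext i
    by_cases h : i = 0 <;> simp [h] <;> ring
  map_smul' a l := by
    funext i
    by_cases h : i = 0 <;> simp [h, smul_eq_mul] <;> ring

/-- `K` is a chain homotopy between `ω∘θ` and the identity, satisfying the side
conditions of the Perturbation Lemma: `δ∘K = ω₀∘θ₀ - id`, `K∘δ = ω₁∘θ₁ - id`,
`θ₁∘K = 0` and `K∘ω₀ = 0`. -/
theorem K_homotopy_side_conditions :
    deltaDiff.comp Kmap = omega0.comp theta0 - LinearMap.id ∧
    Kmap.comp deltaDiff = omega1.comp theta1 - LinearMap.id ∧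
    theta1.comp Kmap = 0 ∧
    Kmap.comp omega0 = 0 := by
  refine ⟨LinearMap.ext fun l => funext fun j => ?_, LinearMap.ext fun μ => funext fun i => ?_,
    LinearMap.ext fun l => ?_, LinearMap.ext fun p => funext fun i => ?_⟩
  · rcases j with _ | _ | j
    · simp [deltaDiff, omega0, theta0, ey, ez, ind0]
    · simp [deltaDiff, Kmap, omega0, theta0, ey, ez, ind0]
    · simp [deltaDiff, Kmap, omega0, theta0, ey, ez, ind0]
      field_simp
  · rcases i with _ | i
    · simp [Kmap, omega1, theta1]
    · simp [deltaDiff, Kmap, omega1, theta1]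
      field_simp
  · simp [theta1, Kmap]
  · simp [Kmap, omega0, ind0]

end
end

section
/- The differential δ : F → F is injective, its range is exactly the subspace of functions vanishing at 0, the quotient F/range(δ) is one-dimensional spanned by the class of the indicator function δ₀, and the constant function 𝟏 and δ₀ represent the same nonzero class (i.e. 𝟏 − δ₀ ∈ range(δ)). -/
noncomputable section

@[simp]
theorem deltaDiff_apply_zero (μ : ℕ → ℚ) : deltaDiff μ 0 = 0 := by
  simp [deltaDiff]

@[simp]
theorem deltaDiff_apply_succ (μ : ℕ → ℚ) (j : ℕ) :
    deltaDiff μ (j + 1) = ((j : ℚ) + 1) * μ j := by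
  simp [deltaDiff]

@[simp]
theorem ind0_zero : ind0 0 = 1 := rfl

theorem deltaDiff_injective : Function.Injective deltaDiff := by
  intro μ ν h
  funext j
  have hj := congrFun h (j + 1)
  rw [deltaDiff_apply_succ, deltaDiff_apply_succ] at hj
  exact mul_left_cancel₀ (Nat.cast_add_one_ne_zero j) hj

theorem mem_range_deltaDiff {f : ℕ → ℚ} : f ∈ LinearMap.range deltaDiff ↔ f 0 = 0 := by
  constructor
  · rintro ⟨μ, rfl⟩
    exact deltaDiff_apply_zero μ
  · intro hf
    refine ⟨fun j => f (j + 1) / ((j : ℚ) + 1), ?_⟩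
    funext j
    cases j with
    | zero => rw [deltaDiff_apply_zero, hf]
    | succ j =>
      rw [deltaDiff_apply_succ]
      exact mul_div_cancel₀ _ (Nat.cast_add_one_ne_zero j)

/-- `δ` is injective, its range is exactly the functions vanishing at `0`
(the kernel of evaluation at `0`), the quotient `F/range δ` is one-dimensional
spanned by the nonzero class of `α₀`, and `𝟏` and `α₀` represent the same
class: `𝟏 - α₀ ∈ range δ`.  (The homology of the universal coalgebra `𝔅` is
one-dimensional, concentrated in degree 0, generated by `[α₀] = [∑_i α_i]`.) -/
theorem deltaDiff_homology :
    Function.Injective deltaDiff ∧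
    LinearMap.range deltaDiff =
      LinearMap.ker (LinearMap.proj 0 : (ℕ → ℚ) →ₗ[ℚ] ℚ) ∧
    Submodule.span ℚ
      {Submodule.Quotient.mk (p := LinearMap.range deltaDiff) ind0} = ⊤ ∧
    Submodule.Quotient.mk (p := LinearMap.range deltaDiff) ind0 ≠ 0 ∧
    ((fun _ => (1 : ℚ)) - ind0) ∈ LinearMap.range deltaDiff := by
  refine ⟨deltaDiff_injective, ?_, ?_, ?_, ?_⟩
  · ext f
    rw [mem_range_deltaDiff, LinearMap.mem_ker, LinearMap.proj_apply]
  · refine eq_top_iff.2 fun x _ => ?_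
    obtain ⟨f, rfl⟩ := Submodule.Quotient.mk_surjective _ x
    refine Submodule.mem_span_singleton.2 ⟨f 0, ?_⟩
    rw [← Submodule.Quotient.mk_smul, Submodule.Quotient.eq, mem_range_deltaDiff]
    simp
  · rw [Ne, Submodule.Quotient.mk_eq_zero, mem_range_deltaDiff]
    simp
  · rw [mem_range_deltaDiff]
    simp

end
end

section
/- Multiplication by (1/2)(x² − x) is an injective ℚ-linear endomorphism of the polynomial ring ℚ[x], and its cokernel, the quotient ring ℚ[x]/(x² − x), is isomorphic as a ℚ-algebra to ℚ × ℚ. Consequently, the two-term cochain complex ℚ[x]·y → ℚ[x] with differential q(x)·y ↦ (1/2)·q(x)·(x²−x) has cohomology concentrated in degree 0, isomorphic to ℚ × ℚ. -/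
open Polynomial

noncomputable section

/-- The differential of the cochain algebra `𝒞^∞(𝕃(u),∂) = (Λ(x,y),d)` in the
only nontrivial degree: multiplication by `(1/2)(x² - x)` on `ℚ[x]`
(`q(x)·y ↦ (1/2)·q(x)·(x² - x)`). -/
def dLS : Polynomial ℚ →ₗ[ℚ] Polynomial ℚ :=
  LinearMap.mulLeft ℚ (Polynomial.C (1/2 : ℚ) * (Polynomial.X ^ 2 - Polynomial.X))

/-- Evaluation of a rational polynomial at the two points `0` and `1`. -/
def evalZeroOne : ℚ[X] →ₐ[ℚ] ℚ × ℚ :=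
  (aeval (0 : ℚ)).prod (aeval (1 : ℚ))

theorem evalZeroOne_apply (p : ℚ[X]) : evalZeroOne p = (p.eval 0, p.eval 1) := by
  simp [evalZeroOne, coe_aeval_eq_eval]

theorem evalZeroOne_surjective : Function.Surjective evalZeroOne := by
  rintro ⟨a, b⟩
  exact ⟨C a + C (b - a) * X, by simp [evalZeroOne_apply]⟩

theorem evalZeroOne_eq_zero_iff (p : ℚ[X]) : evalZeroOne p = 0 ↔ X ^ 2 - X ∣ p := by
  have hfactor : (X ^ 2 - X : ℚ[X]) = (X - C 0) * (X - C 1) := by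
    simp only [map_zero, map_one]
    ring
  rw [evalZeroOne_apply, Prod.mk_eq_zero, hfactor]
  constructor
  · rintro ⟨h0, h1⟩
    exact (isCoprime_X_sub_C_of_isUnit_sub (by simp)).mul_dvd
      (dvd_iff_isRoot.mpr h0) (dvd_iff_isRoot.mpr h1)
  · rintro ⟨q, rfl⟩
    simp

theorem ker_evalZeroOne :
    RingHom.ker evalZeroOne = Ideal.span ({X ^ 2 - X} : Set ℚ[X]) := by
  ext p
  rw [RingHom.mem_ker, evalZeroOne_eq_zero_iff, Ideal.mem_span_singleton]

theorem dLS_apply (q : ℚ[X]) : dLS q = C (1 / 2 : ℚ) * (X ^ 2 - X) * q := rfl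

theorem dLS_injective : Function.Injective dLS := by
  have hne : (X ^ 2 - X : ℚ[X]) ≠ 0 := fun h => by
    simpa [coeff_X] using congrArg (fun p : ℚ[X] => p.coeff 2) h
  exact mul_right_injective₀ (mul_ne_zero (C_ne_zero.mpr (by norm_num)) hne)

theorem range_dLS : LinearMap.range dLS = LinearMap.ker evalZeroOne.toLinearMap := by
  ext p
  rw [LinearMap.mem_ker, AlgHom.toLinearMap_apply, evalZeroOne_eq_zero_iff, LinearMap.mem_range]
  constructor
  · rintro ⟨q, rfl⟩
    exact ⟨C (1 / 2) * q, by rw [dLS_apply]; ring⟩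
  · rintro ⟨q, rfl⟩
    refine ⟨C 2 * q, ?_⟩
    have hC : (C (1 / 2 : ℚ) * C 2 : ℚ[X]) = 1 := by rw [← C_mul]; norm_num
    rw [dLS_apply]
    linear_combination (X ^ 2 - X) * q * hC

/-- Multiplication by `(1/2)(x² - x)` is an injective `ℚ`-linear endomorphism of
`ℚ[x]`; the quotient ring `ℚ[x]/(x² - x)` is isomorphic as a `ℚ`-algebra to
`ℚ × ℚ`; consequently the two-term cochain complex `ℚ[x]·y → ℚ[x]`,
`q(x)·y ↦ (1/2)q(x)(x² - x)`, has cohomology concentrated in degree 0,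
where it is (`ℚ`-linearly) isomorphic to `ℚ × ℚ` — the model of `S⁰`. -/
theorem cochains_of_MC_dgl_model_S0 :
    Function.Injective dLS ∧
    Nonempty ((Polynomial ℚ ⧸ Ideal.span ({Polynomial.X ^ 2 - Polynomial.X} : Set (Polynomial ℚ))) ≃ₐ[ℚ]
      (ℚ × ℚ)) ∧
    Nonempty ((Polynomial ℚ ⧸ LinearMap.range dLS) ≃ₗ[ℚ] (ℚ × ℚ)) := by
  refine ⟨dLS_injective, ⟨?_⟩, ⟨?_⟩⟩
  · exact (Ideal.quotientEquivAlgOfEq ℚ ker_evalZeroOne.symm).trans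
      (Ideal.quotientKerAlgEquivOfSurjective evalZeroOne_surjective)
  · exact (Submodule.quotEquivOfEq _ _ range_dLS).trans
      (evalZeroOne.toLinearMap.quotKerEquivOfSurjective evalZeroOne_surjective)

end
end
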